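/- Fix d, p, n ≥ 1 and let M_p = {α ∈ ℕ^d : |α| ≤ p} be the set of monomial multi-indices of degree at most p. For every sequence of step sizes η^(1), η^(2), … ∈ ℝ there exist an integer L ≤ p·C(d+p−2, p−1), subsets b_1, …, b_L ⊆ M_p with ⋃_ℓ b_ℓ = M_p and |b_ℓ| ≤ 2d+1 for every ℓ, and weights of a 2L-layer bilinear Transformer with embedding dimension D = 2d+1, such that for all x_1, …, x_{n+1} ∈ ℝ^d and y_1, …, y_n ∈ ℝ (prompt with i-th column ((1, x_i, 0_d), y_i) for i ≤ n and last column ((1, x_{n+1}, 0_d), 0)) and every ℓ ∈ {1, …, L}: Z^(2ℓ)[2d+2, n+1] = f(x_{n+1}; w^(ℓ)), where (w^(ℓ)) are the iterates of block-coordinate descent for degree-p polynomial regression with blocks b_ℓ, step sizes η^(ℓ), and initialization w^(0) = 0. -/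

import Mathlib

open MeasureTheory ProbabilityTheory Matrix

noncomputable section

/-- The mask `M = diag(I_n, 0)`. -/
def attnMask (n : ℕ) : Matrix (Fin (n + 1)) (Fin (n + 1)) ℝ :=
  Matrix.diagonal fun i => if i = Fin.last n then 0 else 1

/-- A linear self-attention layer with weights `P, Q`. -/
def attn (D n : ℕ) (P Q : Matrix (Fin (D + 1)) (Fin (D + 1)) ℝ)
    (Z : Matrix (Fin (D + 1)) (Fin (n + 1)) ℝ) : Matrix (Fin (D + 1)) (Fin (n + 1)) ℝ :=
  Z + (n : ℝ)⁻¹ • (P * Z * attnMask n * (Zᵀ * Q * Z))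

/-- `diag(W, 0)`: places `W` in the top-left `D × D` block. -/
def diagEmbed (D : ℕ) (W : Matrix (Fin D) (Fin D) ℝ) : Matrix (Fin (D + 1)) (Fin (D + 1)) ℝ :=
  Matrix.of fun i j =>
    if hi : (i : ℕ) < D then
      (if hj : (j : ℕ) < D then W ⟨(i : ℕ), hi⟩ ⟨(j : ℕ), hj⟩ else 0)
    else 0

/-- The bilinear feed-forward layer `bilin(Z) = Z + (diag(W₀,0)Z) ⊙ (diag(W₁,0)Z)`. -/
def bilinLayer (D n : ℕ) (W0 W1 : Matrix (Fin D) (Fin D) ℝ)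
    (Z : Matrix (Fin (D + 1)) (Fin (n + 1)) ℝ) : Matrix (Fin (D + 1)) (Fin (n + 1)) ℝ :=
  Matrix.of fun i j => Z i j + (diagEmbed D W0 * Z) i j * (diagEmbed D W1 * Z) i j

/-- Forward pass of the `2L`-layer bilinear Transformer: `TFbilinFwd … Z ℓ = Z^{(2ℓ)}`. -/
def TFbilinFwd (D n : ℕ) (W0 W1 : ℕ → Matrix (Fin D) (Fin D) ℝ)
    (P Q : ℕ → Matrix (Fin (D + 1)) (Fin (D + 1)) ℝ)
    (Z : Matrix (Fin (D + 1)) (Fin (n + 1)) ℝ) : ℕ → Matrix (Fin (D + 1)) (Fin (n + 1)) ℝ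
  | 0 => Z
  | ℓ + 1 => attn D n (P (ℓ + 1)) (Q (ℓ + 1))
      (bilinLayer D n (W0 (ℓ + 1)) (W1 (ℓ + 1)) (TFbilinFwd D n W0 W1 P Q Z ℓ))

/-- The prompt matrix: column `i ≤ n` is `((1, x_i, 0_d), y_i)`, last column
`((1, x_{n+1}, 0_d), 0)`. -/
def promptX (d D n : ℕ) (x : Fin (n + 1) → Fin d → ℝ) (y : Fin n → ℝ) :
    Matrix (Fin (D + 1)) (Fin (n + 1)) ℝ :=
  Matrix.of fun i j =>
    if h0 : (i : ℕ) = 0 then 1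
    else if h1 : (i : ℕ) ≤ d then x j ⟨(i : ℕ) - 1, by omega⟩
    else if (i : ℕ) = D then (if hj : (j : ℕ) < n then y ⟨(j : ℕ), hj⟩ else 0)
    else 0

/-- Multi-indices `α ∈ ℕ^d` of total degree `|α| ≤ p` (each entry is at most `p`, so we
record entries in `Fin (p+1)`). -/
abbrev MIdx (d p : ℕ) := { α : Fin d → Fin (p + 1) // ∑ i, (α i : ℕ) ≤ p }

/-- The degree-`p` polynomial predictor `f(x; w) = Σ_{|α| ≤ p} w_α x^α`. -/
def polyPred (d p : ℕ) (w : MIdx d p → ℝ) (x : Fin d → ℝ) : ℝ :=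
  ∑ α : MIdx d p, w α * ∏ r, x r ^ (α.1 r : ℕ)

/-- The polynomial regression loss `L(w) = (1/2n) Σᵢ (f(xᵢ; w) + yᵢ)²`. -/
def polyLoss (d p n : ℕ) (x : Fin n → Fin d → ℝ) (y : Fin n → ℝ) (w : MIdx d p → ℝ) : ℝ :=
  (2 * (n : ℝ))⁻¹ * ∑ i : Fin n, (polyPred d p w (x i) + y i) ^ 2

/-- Block-coordinate descent iterates for an objective `F`, step sizes `η^{(ℓ)}` and
blocks `b_ℓ`, starting from `w^{(0)} = 0`. -/
def bcdIter {I : Type} [Fintype I] [DecidableEq I]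
    (F : (I → ℝ) → ℝ) (η : ℕ → ℝ) (b : ℕ → Finset I) : ℕ → I → ℝ
  | 0 => 0
  | ℓ + 1 => fun α =>
      if α ∈ b (ℓ + 1) then
        bcdIter F η b ℓ α - η (ℓ + 1) * fderiv ℝ F (bcdIter F η b ℓ) (Pi.single α 1)
      else bcdIter F η b ℓ α

/-- Monomial evaluation. -/
def mono {d : ℕ} (γ : Fin d → ℕ) (x : Fin d → ℝ) : ℝ := ∏ r, x r ^ γ r

lemma mono_zero {d : ℕ} (x : Fin d → ℝ) : mono 0 x = 1 := by simp [mono]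

lemma mono_add {d : ℕ} (γ δ : Fin d → ℕ) (x : Fin d → ℝ) :
    mono (γ + δ) x = mono γ x * mono δ x := by
  simp [mono, pow_add, Finset.prod_mul_distrib]

lemma mono_single {d : ℕ} (r : Fin d) (x : Fin d → ℝ) :
    mono (Pi.single r 1) x = x r := by
  unfold mono
  rw [Finset.prod_eq_single r]
  · simp
  · intro b _ hb; simp [Pi.single_apply, hb]
  · simp

/-- Truncating inclusion of exponent vectors into `MIdx`. -/
def mkI (d p : ℕ) (γ : Fin d → ℕ) : MIdx d p :=
  if h : ∑ i, γ i ≤ p then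
    ⟨fun i => ⟨γ i, Nat.lt_succ_of_le
      ((Finset.single_le_sum (f := γ) (fun _ _ => Nat.zero_le _) (Finset.mem_univ i)).trans h)⟩, h⟩
  else ⟨fun _ => 0, by simp⟩

lemma mkI_val {d p : ℕ} {γ : Fin d → ℕ} (h : ∑ i, γ i ≤ p) (i : Fin d) :
    (((mkI d p γ).1 i : Fin (p + 1)) : ℕ) = γ i := by
  simp [mkI, h]

lemma mkI_self {d p : ℕ} (α : MIdx d p) : mkI d p (fun i => (α.1 i : ℕ)) = α := by
  apply Subtype.ext
  funext i
  apply Fin.ext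
  rw [mkI_val α.2]

/-- Exponent vectors held by the scratch rows. -/
def sexps {d : ℕ} (s : Option (Fin d → ℕ)) : Finset (Fin d → ℕ) :=
  match s with
  | none => ∅
  | some β => Finset.univ.image fun r : Fin d => β + (Pi.single r 1 : Fin d → ℕ)

/-- Exponent vectors available in the state with scratch content `s`. -/
def exps {d : ℕ} (s : Option (Fin d → ℕ)) : Finset (Fin d → ℕ) :=
  insert (0 : Fin d → ℕ)
    ((Finset.univ.image fun r : Fin d => (Pi.single r 1 : Fin d → ℕ)) ∪ sexps s)

/-- Block attached to the scratch content. -/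
def blk (d p : ℕ) (s : Option (Fin d → ℕ)) : Finset (MIdx d p) := (exps s).image (mkI d p)

/-- Admissible scratch contents. -/
def okS {d : ℕ} (p : ℕ) (s : Option (Fin d → ℕ)) : Prop :=
  ∀ β, s = some β → 1 ≤ ∑ i, β i ∧ ∑ i, β i + 1 ≤ p

/-- Scratch values. -/
def sval {d : ℕ} (s : Option (Fin d → ℕ)) (x : Fin d → ℝ) (r : Fin d) : ℝ :=
  match s with
  | none => 0
  | some β => mono β x * x r

lemma sum_single' {d : ℕ} (r : Fin d) : ∑ i, (Pi.single r 1 : Fin d → ℕ) i = 1 := by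
  simp [Pi.single_apply]

lemma exps_le {d p : ℕ} (hp : 1 ≤ p) {s : Option (Fin d → ℕ)} (hs : okS p s) {γ : Fin d → ℕ}
    (h : γ ∈ exps s) : ∑ i, γ i ≤ p := by
  unfold exps at h
  rcases s with _ | β
  · simp only [sexps, Finset.union_empty, Finset.mem_insert, Finset.mem_image, Finset.mem_univ,
      true_and] at h
    rcases h with rfl | ⟨r, rfl⟩
    · simp
    · rw [sum_single']; exact hp
  · simp only [sexps, Finset.mem_union, Finset.mem_insert, Finset.mem_image, Finset.mem_univ,
      true_and] at h
    rcases h with rfl | ⟨r, rfl⟩ | ⟨r, rfl⟩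
    · simp
    · rw [sum_single']; exact hp
    · simp only [Pi.add_apply, Finset.sum_add_distrib, sum_single']
      exact (hs β rfl).2

lemma blk_card (d p : ℕ) (s : Option (Fin d → ℕ)) : (blk d p s).card ≤ 2 * d + 1 := by
  refine Finset.card_image_le.trans ?_
  unfold exps
  refine (Finset.card_insert_le _ _).trans ?_
  have h1 : (Finset.univ.image fun r : Fin d => (Pi.single r 1 : Fin d → ℕ)).card ≤ d := by
    simpa using Finset.card_image_le (s := (Finset.univ : Finset (Fin d)))
      (f := fun r : Fin d => (Pi.single r 1 : Fin d → ℕ))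
  have h2 := Finset.card_union_le (Finset.univ.image fun r : Fin d => (Pi.single r 1 : Fin d → ℕ))
    (sexps s)
  have h3 : (sexps s).card ≤ d := by
    unfold sexps
    rcases s with _ | β
    · simp
    · simpa using Finset.card_image_le (s := (Finset.univ : Finset (Fin d)))
        (f := fun r : Fin d => β + (Pi.single r 1 : Fin d → ℕ))
  omega

lemma sum_blk {d p : ℕ} (hp : 1 ≤ p) {s : Option (Fin d → ℕ)} (hs : okS p s)
    (F : (Fin d → ℕ) → ℝ) :
    ∑ α ∈ blk d p s, F (fun i => (α.1 i : ℕ)) = ∑ γ ∈ exps s, F γ := by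
  unfold blk
  have key : ∀ γ ∈ exps s, (fun i => (((mkI d p γ).1 i : Fin (p + 1)) : ℕ)) = γ := by
    intro γ h
    funext i
    exact mkI_val (exps_le hp hs h) i
  rw [Finset.sum_image]
  · exact Finset.sum_congr rfl fun γ h => by rw [key γ h]
  · intro a ha b hb hab
    rw [← key a ha, ← key b hb, hab]

lemma single_inj {d : ℕ} : Function.Injective fun r : Fin d => (Pi.single r 1 : Fin d → ℕ) := by
  intro a b h
  by_contra hne
  have := congrFun h a
  simp [Pi.single_apply, hne] at this

lemma sum_exps {d p : ℕ} {s : Option (Fin d → ℕ)} (hs : okS p s) (x x' : Fin d → ℝ) :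
    ∑ γ ∈ exps s, mono γ x * mono γ x' =
      1 + ∑ r, x r * x' r + ∑ r, sval s x r * sval s x' r := by
  unfold exps
  have e1 : ∑ γ ∈ (Finset.univ.image fun r : Fin d => (Pi.single r 1 : Fin d → ℕ)),
      mono γ x * mono γ x' = ∑ r, x r * x' r := by
    rw [Finset.sum_image (fun a _ b _ h => single_inj h)]
    simp [mono_single]
  have z1 : (0 : Fin d → ℕ) ∉ (Finset.univ.image fun r : Fin d => (Pi.single r 1 : Fin d → ℕ)) := by
    intro h
    simp only [Finset.mem_image, Finset.mem_univ, true_and] at h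
    obtain ⟨r, hr⟩ := h
    have := sum_single' r
    rw [hr] at this
    simp at this
  rcases s with _ | β
  · simp only [Finset.union_empty, sval, sexps]
    rw [Finset.sum_insert z1, e1]
    simp [mono_zero]
  · have hβ := (hs β rfl).1
    simp only [sval, sexps]
    rw [Finset.sum_insert, Finset.sum_union, e1, Finset.sum_image]
    · simp [mono_zero, mono_add, mono_single, add_assoc]
    · intro a _ b _ h
      exact single_inj (add_left_cancel h)
    · rw [Finset.disjoint_left]
      intro γ h1 h2
      simp only [Finset.mem_image, Finset.mem_univ, true_and] at h1 h2
      obtain ⟨r, rfl⟩ := h1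
      obtain ⟨q, hq⟩ := h2
      have := congrArg (fun f : Fin d → ℕ => ∑ i, f i) hq
      simp only [Pi.add_apply, Finset.sum_add_distrib, sum_single'] at this
      omega
    · intro h
      rcases Finset.mem_union.1 h with h | h
      · exact z1 h
      · simp only [Finset.mem_image, Finset.mem_univ, true_and] at h
        obtain ⟨q, hq⟩ := h
        have := congrArg (fun f : Fin d → ℕ => ∑ i, f i) hq
        simp only [Pi.add_apply, Finset.sum_add_distrib, sum_single'] at this
        simp at this

lemma polyPred_eq (d p : ℕ) (w : MIdx d p → ℝ) (x : Fin d → ℝ) :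
    polyPred d p w x = ∑ α : MIdx d p, w α * mono (fun i => (α.1 i : ℕ)) x := rfl

lemma fderiv_loss (d p n : ℕ) (hn : 1 ≤ n) (x : Fin n → Fin d → ℝ) (y : Fin n → ℝ)
    (w : MIdx d p → ℝ) (α : MIdx d p) :
    fderiv ℝ (polyLoss d p n x y) w (Pi.single α 1) =
      (n : ℝ)⁻¹ * ∑ i, (polyPred d p w (x i) + y i) * mono (fun r => (α.1 r : ℕ)) (x i) := by
  have hdiff : DifferentiableAt ℝ (polyLoss d p n x y) w := by
    unfold polyLoss polyPred
    fun_prop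
  rw [← hdiff.lineDeriv_eq_fderiv]
  apply HasDerivAt.deriv
  have hlin : ∀ (t : ℝ) (i : Fin n), polyPred d p (w + t • Pi.single α 1) (x i)
      = polyPred d p w (x i) + t * mono (fun r => (α.1 r : ℕ)) (x i) := by
    intro t i
    simp only [polyPred_eq, Pi.add_apply, Pi.smul_apply, smul_eq_mul, add_mul,
      Finset.sum_add_distrib, Pi.single_apply]
    congr 1
    simp
  simp only [polyLoss, hlin]
  have hn' : (n : ℝ) ≠ 0 := by positivity
  have h1 : ∀ i ∈ (Finset.univ : Finset (Fin n)), HasDerivAt (fun t : ℝ => (polyPred d p w (x i) + t * mono (fun r => (α.1 r : ℕ)) (x i)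
      + y i) ^ 2) (2 * ((polyPred d p w (x i) + y i) * mono (fun r => (α.1 r : ℕ)) (x i))) 0 := by
    intro i _
    have := ((((hasDerivAt_id (0 : ℝ)).mul_const (mono (fun r => (α.1 r : ℕ)) (x i))).const_add
      (polyPred d p w (x i))).add_const (y i)).pow 2
    refine this.congr_deriv ?_
    simp
    ring
  have h2 := (HasDerivAt.fun_sum h1).const_mul ((2 * (n : ℝ))⁻¹)
  refine h2.congr_deriv ?_
  rw [← Finset.mul_sum]
  field_simp

lemma pred_step (d p n : ℕ) (hp : 1 ≤ p) (hn : 1 ≤ n) (x : Fin n → Fin d → ℝ) (y : Fin n → ℝ)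
    (η : ℕ → ℝ) (st : ℕ → Option (Fin d → ℕ)) (ℓ : ℕ) (hs : okS p (st (ℓ + 1)))
    (x' : Fin d → ℝ) :
    polyPred d p (bcdIter (polyLoss d p n x y) η (fun k => blk d p (st k)) (ℓ + 1)) x' =
    polyPred d p (bcdIter (polyLoss d p n x y) η (fun k => blk d p (st k)) ℓ) x' -
      η (ℓ + 1) * ((n : ℝ)⁻¹ * ∑ i,
        (polyPred d p (bcdIter (polyLoss d p n x y) η (fun k => blk d p (st k)) ℓ) (x i) + y i) *
        (1 + ∑ r, x i r * x' r + ∑ r, sval (st (ℓ + 1)) (x i) r * sval (st (ℓ + 1)) x' r)) := by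
  set w := bcdIter (polyLoss d p n x y) η (fun k => blk d p (st k)) ℓ with hw
  have hw' : ∀ α, bcdIter (polyLoss d p n x y) η (fun k => blk d p (st k)) (ℓ + 1) α =
      w α - if α ∈ blk d p (st (ℓ + 1)) then
        η (ℓ + 1) * fderiv ℝ (polyLoss d p n x y) w (Pi.single α 1) else 0 := by
    intro α
    simp only [bcdIter, ← hw]
    split_ifs <;> simp
  rw [polyPred_eq]
  simp only [hw', sub_mul, Finset.sum_sub_distrib]
  rw [← polyPred_eq]
  congr 1
  simp only [ite_mul, zero_mul, Finset.sum_ite_mem, Finset.univ_inter, fderiv_loss d p n hn]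
  rw [sum_blk hp hs (fun γ => η (ℓ + 1) * ((n : ℝ)⁻¹ * ∑ i, (polyPred d p w (x i) + y i) *
    mono γ (x i)) * mono γ x')]
  simp only [← sum_exps hs, Finset.mul_sum, Finset.sum_mul]
  rw [Finset.sum_comm]
  refine Finset.sum_congr rfl fun i _ => Finset.sum_congr rfl fun γ _ => by ring

/-- The state after some layers: constant row, data rows, scratch rows, label row. -/
def stateMat (d n : ℕ) (s : Option (Fin d → ℕ)) (x : Fin (n + 1) → Fin d → ℝ)
    (u : Fin (n + 1) → ℝ) : Matrix (Fin (2 * d + 1 + 1)) (Fin (n + 1)) ℝ :=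
  Matrix.of fun i j =>
    if h0 : (i : ℕ) = 0 then 1
    else if h1 : (i : ℕ) ≤ d then x j ⟨(i : ℕ) - 1, by omega⟩
    else if h2 : (i : ℕ) ≤ 2 * d then sval s (x j) ⟨(i : ℕ) - d - 1, by omega⟩
    else u j

lemma sum_split {d : ℕ} (F : Fin (2 * d + 1) → ℝ) :
    ∑ k, F k = F 0 + ∑ r : Fin d, F ⟨r + 1, by omega⟩ + ∑ r : Fin d, F ⟨d + r + 1, by omega⟩ := by
  have key : ∀ (m : ℕ) (h : m = d + d) (G : Fin m → ℝ), ∑ k, G k =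
      ∑ r : Fin d, G ⟨r, by omega⟩ + ∑ r : Fin d, G ⟨d + r, by omega⟩ := by
    intro m h G
    subst h
    rw [Fin.sum_univ_add]
    rfl
  rw [Fin.sum_univ_succ, key (2 * d) (by omega), add_assoc]
  rfl

lemma attn_apply (D n : ℕ) (η : ℝ) (Z : Matrix (Fin (D + 1)) (Fin (n + 1)) ℝ)
    (i : Fin (D + 1)) (j : Fin (n + 1)) :
    attn D n (Matrix.single (Fin.last D) (Fin.last D) (-η))
      (Matrix.diagonal fun i => if i = Fin.last D then 0 else 1) Z i j =
    Z i j + if i = Fin.last D then - (η * ((n : ℝ)⁻¹ * ∑ m : Fin n, Z (Fin.last D) m.castSucc *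
      ∑ k : Fin D, Z k.castSucc m.castSucc * Z k.castSucc j)) else 0 := by
  have h1 : ∀ m, (Matrix.single (Fin.last D) (Fin.last D) (-η) * Z * attnMask n) i m =
      if i = Fin.last D then (if m = Fin.last n then 0 else -η * Z (Fin.last D) m) else 0 := by
    intro m
    rw [attnMask, Matrix.mul_diagonal]
    by_cases hi : i = Fin.last D
    · subst hi
      rw [Matrix.single_mul_apply_same, if_pos rfl]
      split_ifs <;> simp
    · rw [Matrix.single_mul_apply_of_ne _ _ _ _ _ hi]
      simp [hi]
  have h2 : ∀ m, (Zᵀ * (Matrix.diagonal fun i => if i = Fin.last D then (0 : ℝ) else 1) * Z) m j =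
      ∑ k : Fin D, Z k.castSucc m * Z k.castSucc j := by
    intro m
    rw [Matrix.mul_apply, Fin.sum_univ_castSucc]
    simp [Matrix.mul_diagonal, Fin.castSucc_ne_last]
  unfold attn
  rw [Matrix.add_apply, Matrix.smul_apply, Matrix.mul_apply]
  simp only [h1, h2]
  congr 1
  split_ifs with hi
  · rw [Fin.sum_univ_castSucc]
    simp only [Fin.castSucc_ne_last, if_true, if_false, zero_mul, add_zero, smul_eq_mul]
    simp only [Finset.mul_sum, ← Finset.sum_neg_distrib]
    refine Finset.sum_congr rfl fun m _ => Finset.sum_congr rfl fun k _ => by ring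
  · simp

lemma diagEmbed_mul (D n : ℕ) (W : Matrix (Fin D) (Fin D) ℝ)
    (Z : Matrix (Fin (D + 1)) (Fin (n + 1)) ℝ) (i : Fin (D + 1)) (j : Fin (n + 1)) :
    (diagEmbed D W * Z) i j =
      if h : (i : ℕ) < D then ∑ k : Fin D, W ⟨i, h⟩ k * Z k.castSucc j else 0 := by
  rw [Matrix.mul_apply, Fin.sum_univ_castSucc]
  by_cases h : (i : ℕ) < D
  · simp [diagEmbed, h]
  · simp [diagEmbed, h]

/-- First factor: scratch row `i` reads row `c i`. -/
def wA (d : ℕ) (c : Fin (2 * d + 1) → Fin (2 * d + 1)) :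
    Matrix (Fin (2 * d + 1)) (Fin (2 * d + 1)) ℝ :=
  Matrix.of fun i k => if d < (i : ℕ) then (if k = c i then 1 else 0) else 0

/-- Second factor: every row reads `b * row e + a * row 0`. -/
def wB (d : ℕ) (e : Fin (2 * d + 1)) (a b : ℝ) :
    Matrix (Fin (2 * d + 1)) (Fin (2 * d + 1)) ℝ :=
  Matrix.of fun _ k => (if k = e then b else 0) + (if k = 0 then a else 0)

lemma bilin_apply (d n : ℕ) (c : Fin (2 * d + 1) → Fin (2 * d + 1)) (e : Fin (2 * d + 1))
    (a b : ℝ) (Z : Matrix (Fin (2 * d + 1 + 1)) (Fin (n + 1)) ℝ)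
    (i : Fin (2 * d + 1 + 1)) (j : Fin (n + 1)) :
    bilinLayer (2 * d + 1) n (wA d c) (wB d e a b) Z i j = Z i j +
      if h : (i : ℕ) < 2 * d + 1 ∧ d < (i : ℕ) then
        Z (c ⟨i, h.1⟩).castSucc j * (b * Z e.castSucc j + a * Z 0 j) else 0 := by
  unfold bilinLayer
  simp only [Matrix.of_apply, diagEmbed_mul]
  congr 1
  by_cases h1 : (i : ℕ) < 2 * d + 1
  · by_cases h2 : d < (i : ℕ)
    · simp [h1, h2, wA, wB, add_mul, Finset.sum_add_distrib]
    · simp [h2, wA]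
  · simp [h1]

/-- Scratch transition. -/
def stepS {d : ℕ} (s s' : Option (Fin d → ℕ)) : Prop :=
  s' = none ∨ ∃ i, s' = some (s.getD 0 + Pi.single i 1)

lemma bilin_step {d : ℕ} {s s' : Option (Fin d → ℕ)} (h : stepS s s') :
    ∃ W0 W1 : Matrix (Fin (2 * d + 1)) (Fin (2 * d + 1)) ℝ,
      ∀ (n : ℕ) (x : Fin (n + 1) → Fin d → ℝ) (u : Fin (n + 1) → ℝ),
        bilinLayer (2 * d + 1) n W0 W1 (stateMat d n s x u) = stateMat d n s' x u := by
  rcases h with rfl | ⟨q, rfl⟩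
  · refine ⟨wA d id, wB d 0 0 (-1), fun n x u => ?_⟩
    ext i j
    rw [bilin_apply]
    by_cases h0 : (i : ℕ) = 0
    · simp [stateMat, h0]
    by_cases h1 : (i : ℕ) ≤ d
    · simp [stateMat, h0, h1]
    by_cases h2 : (i : ℕ) ≤ 2 * d
    · have h3 : (i : ℕ) < 2 * d + 1 ∧ d < (i : ℕ) := by omega
      have h0' : i ≠ 0 := fun h => h0 (by simp [h])
      simp [stateMat, h0, h0', h1, h2, h3, sval]
    · have h3 : ¬ ((i : ℕ) < 2 * d + 1 ∧ d < (i : ℕ)) := by omega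
      rw [dif_neg h3]
      simp [stateMat, h0, h1, h2]
  · rcases s with _ | β
    · refine ⟨wA d (fun i => ⟨(i : ℕ) - d, by omega⟩), wB d ⟨q + 1, by omega⟩ 0 1,
        fun n x u => ?_⟩
      ext i j
      rw [bilin_apply]
      by_cases h0 : (i : ℕ) = 0
      · simp [stateMat, h0]
      by_cases h1 : (i : ℕ) ≤ d
      · simp [stateMat, h0, h1]
      by_cases h2 : (i : ℕ) ≤ 2 * d
      · have h3 : (i : ℕ) < 2 * d + 1 ∧ d < (i : ℕ) := by omega
        have h0' : i ≠ 0 := fun h => h0 (by simp [h])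
        have h4 : ¬ (i : ℕ) - d = 0 := by omega
        have h5 : (i : ℕ) - d ≤ d := by omega
        have h6 : (q : ℕ) + 1 ≤ d := by omega
        simp [stateMat, h0, h0', h1, h2, h3, h4, h5, h6, sval, mono_single]
        ring
      · have h3 : ¬ ((i : ℕ) < 2 * d + 1 ∧ d < (i : ℕ)) := by omega
        rw [dif_neg h3]
        simp [stateMat, h0, h1, h2]
    · refine ⟨wA d id, wB d ⟨q + 1, by omega⟩ (-1) 1, fun n x u => ?_⟩
      ext i j
      rw [bilin_apply]
      by_cases h0 : (i : ℕ) = 0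
      · simp [stateMat, h0]
      by_cases h1 : (i : ℕ) ≤ d
      · simp [stateMat, h0, h1]
      by_cases h2 : (i : ℕ) ≤ 2 * d
      · have h3 : (i : ℕ) < 2 * d + 1 ∧ d < (i : ℕ) := by omega
        have h0' : i ≠ 0 := fun h => h0 (by simp [h])
        have h6 : (q : ℕ) + 1 ≤ d := by omega
        simp [stateMat, h0, h0', h1, h2, h3, h6, sval, mono_single, mono_add]
        ring
      · have h3 : ¬ ((i : ℕ) < 2 * d + 1 ∧ d < (i : ℕ)) := by omega
        rw [dif_neg h3]
        simp [stateMat, h0, h1, h2]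

lemma attn_step {d n : ℕ} (s : Option (Fin d → ℕ)) (x : Fin (n + 1) → Fin d → ℝ)
    (u : Fin (n + 1) → ℝ) (η : ℝ) :
    attn (2 * d + 1) n (Matrix.single (Fin.last _) (Fin.last _) (-η))
      (Matrix.diagonal fun i => if i = Fin.last _ then 0 else 1) (stateMat d n s x u) =
    stateMat d n s x (fun j => u j - η * ((n : ℝ)⁻¹ * ∑ m : Fin n, u m.castSucc *
      (1 + ∑ r, x m.castSucc r * x j r +
        ∑ r, sval s (x m.castSucc) r * sval s (x j) r))) := by
  ext i j
  rw [attn_apply]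
  have hK : ∀ m : Fin n, ∑ k : Fin (2 * d + 1), stateMat d n s x u k.castSucc m.castSucc *
      stateMat d n s x u k.castSucc j = 1 + ∑ r, x m.castSucc r * x j r +
        ∑ r, sval s (x m.castSucc) r * sval s (x j) r := by
    intro m
    rw [sum_split]
    congr 1
    · congr 1
      · simp [stateMat]
      · refine Finset.sum_congr rfl fun r _ => ?_
        have h : (r : ℕ) + 1 ≤ d := by omega
        simp [stateMat, h]
    · refine Finset.sum_congr rfl fun r _ => ?_
      have h : ¬ d + (r : ℕ) + 1 ≤ d := by omega
      have h' : d + (r : ℕ) + 1 ≤ 2 * d := by omega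
      have h'' : d + (r : ℕ) + 1 - d - 1 = r := by omega
      simp [stateMat, h, h', h'']
  have hlast : ∀ v j, stateMat d n s x v (Fin.last (2 * d + 1)) j = v j := by
    intro v j
    have h : ¬ 2 * d + 1 ≤ d := by omega
    simp [stateMat, h]
  simp only [hK]
  split_ifs with hi
  · subst hi
    simp only [hlast]
    ring
  · have : (i : ℕ) ≤ 2 * d := by
      have := i.2
      have h : (i : ℕ) ≠ 2 * d + 1 := fun h => hi (Fin.ext h)
      omega
    simp [stateMat, this]

lemma core (d p n : ℕ) (hp : 1 ≤ p) (hn : 1 ≤ n) (η : ℕ → ℝ)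
    (st : ℕ → Option (Fin d → ℕ)) (h0 : st 0 = none) (hst : ∀ ℓ, stepS (st ℓ) (st (ℓ + 1)))
    (hok : ∀ ℓ, okS p (st ℓ)) :
    ∃ (W0 W1 : ℕ → Matrix (Fin (2 * d + 1)) (Fin (2 * d + 1)) ℝ)
      (P Q : ℕ → Matrix (Fin (2 * d + 1 + 1)) (Fin (2 * d + 1 + 1)) ℝ),
      ∀ (x : Fin (n + 1) → Fin d → ℝ) (y : Fin n → ℝ) (ℓ : ℕ),
        TFbilinFwd (2 * d + 1) n W0 W1 P Q (promptX d (2 * d + 1) n x y) ℓ =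
        stateMat d n (st ℓ) x (fun j => polyPred d p
          (bcdIter (polyLoss d p n (fun i => x i.castSucc) y) η (fun k => blk d p (st k)) ℓ) (x j)
            + if hj : (j : ℕ) < n then y ⟨j, hj⟩ else 0) := by
  choose W0 W1 hW using fun ℓ => bilin_step (hst ℓ)
  refine ⟨fun ℓ => W0 (ℓ - 1), fun ℓ => W1 (ℓ - 1),
    fun ℓ => Matrix.single (Fin.last _) (Fin.last _) (-η ℓ),
    fun _ => Matrix.diagonal fun i => if i = Fin.last _ then 0 else 1, fun x y ℓ => ?_⟩
  induction ℓ with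
  | zero =>
    ext i j
    have hz : polyPred d p (bcdIter (polyLoss d p n (fun i => x i.castSucc) y) η
        (fun k => blk d p (st k)) 0) (x j) = 0 := by
      simp [bcdIter, polyPred]
    simp only [TFbilinFwd, promptX, stateMat, Matrix.of_apply, hz, h0, sval, zero_add]
    by_cases h2 : (i : ℕ) ≤ 2 * d
    · have : ¬ (i : ℕ) = 2 * d + 1 := by omega
      simp [h2, this]
    · have : (i : ℕ) = 2 * d + 1 := by have := i.2; omega
      simp [this]
  | succ ℓ ih =>
    simp only [TFbilinFwd, ih, Nat.add_sub_cancel]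
    rw [hW, attn_step]
    congr 1
    funext j
    rw [pred_step d p n hp hn _ _ _ _ _ (hok (ℓ + 1))]
    simp only [Fin.val_castSucc, Fin.is_lt, dite_true, Fin.eta]
    ring

lemma exists_lists (d p : ℕ) (hd : 1 ≤ d) (hp : 1 ≤ p) :
    ∃ lst : ℕ → List (Fin d), (∀ k, (lst k).length = p - 1) ∧
      ∀ γ : Fin d → ℕ, ∑ i, γ i ≤ p - 1 → ∃ k < Nat.choose (d + p - 2) (p - 1),
        ∀ r, ((lst k).take (∑ i, γ i)).count r = γ r := by
  have hcard : Fintype.card (Sym (Fin d) (p - 1)) = Nat.choose (d + p - 2) (p - 1) := by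
    rw [Sym.card_sym_eq_choose, Fintype.card_fin]
    congr 1
    omega
  set N := Nat.choose (d + p - 2) (p - 1) with hN
  let e : Sym (Fin d) (p - 1) ≃ Fin N := Fintype.equivFinOfCardEq hcard
  refine ⟨fun k => if h : k < N then Multiset.sort (e.symm ⟨k, h⟩ : Multiset (Fin d)) (· ≤ ·)
    else List.replicate (p - 1) ⟨0, hd⟩, ?_, ?_⟩
  · intro k
    dsimp only
    split_ifs with h
    · rw [Multiset.length_sort]
      exact (e.symm ⟨k, h⟩).2
    · simp
  · intro γ hγ
    let top : Fin d := ⟨d - 1, by omega⟩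
    let m : Multiset (Fin d) := ∑ i, Multiset.replicate (γ i) i
    have hm : Multiset.card m = ∑ i, γ i := by simp [m]
    have hcount : ∀ r, m.count r = γ r := by
      intro r
      simp [m, Multiset.count_sum', Multiset.count_replicate]
    let l := m.sort (· ≤ ·)
    have hl : l.length = ∑ i, γ i := by simp [l, hm]
    let l' := l ++ List.replicate (p - 1 - ∑ i, γ i) top
    have hl' : l'.length = p - 1 := by simp [l', hl]; omega
    have hsorted : l'.Pairwise (· ≤ ·) := by
      rw [List.pairwise_append]
      refine ⟨Multiset.pairwise_sort _ _, ?_, ?_⟩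
      · simp [List.pairwise_replicate]
      · intro a _ b hb
        rw [List.eq_of_mem_replicate hb]
        change (a : ℕ) ≤ d - 1
        omega
    let S : Sym (Fin d) (p - 1) := ⟨(l' : Multiset (Fin d)), by simpa using hl'⟩
    refine ⟨e S, (e S).2, fun r => ?_⟩
    have hS : Multiset.sort (S : Multiset (Fin d)) (· ≤ ·) = l' := by
      refine List.Perm.eq_of_pairwise' (r := (· ≤ ·)) (Multiset.pairwise_sort _ _) hsorted ?_
      rw [← Multiset.coe_eq_coe, Multiset.sort_eq]
      rfl
    have : (⟨(e S : ℕ), (e S).2⟩ : Fin N) = e S := rfl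
    dsimp only
    rw [dif_pos (e S).2, this, e.symm_apply_apply, hS]
    have h2 : l'.take (∑ i, γ i) = l := by
      rw [← hl]
      simp [l']
    rw [h2, ← hcount r, ← Multiset.coe_count, Multiset.sort_eq]

/-- The schedule of scratch contents. -/
def sched {d : ℕ} (p : ℕ) (lst : ℕ → List (Fin d)) : ℕ → Option (Fin d → ℕ)
  | 0 => none
  | ℓ + 1 => if ℓ % p = 0 then none
      else some (fun r => ((lst (ℓ / p)).take (ℓ % p)).count r)

lemma sched_ok {d p : ℕ} (hp : 1 ≤ p) (lst : ℕ → List (Fin d))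
    (hlen : ∀ k, (lst k).length = p - 1) (ℓ : ℕ) : okS p (sched p lst ℓ) := by
  intro β hβ
  rcases ℓ with _ | ℓ
  · simp [sched] at hβ
  · simp only [sched] at hβ
    split_ifs at hβ with h
    have := Nat.mod_lt ℓ (show 0 < p by omega)
    have hsum : ∑ i, β i = ℓ % p := by
      rw [← Option.some.inj hβ]
      have h3 := Multiset.sum_count_eq_card (s := (Finset.univ : Finset (Fin d)))
        (m := (((lst (ℓ / p)).take (ℓ % p) : List (Fin d)) : Multiset (Fin d)))
        (fun a _ => Finset.mem_univ a)
      simp only [Multiset.coe_count, Multiset.coe_card, List.length_take, hlen] at h3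
      rw [h3]
      omega
    omega

lemma sched_step {d p : ℕ} (hp : 1 ≤ p) (lst : ℕ → List (Fin d))
    (hlen : ∀ k, (lst k).length = p - 1) (ℓ : ℕ) :
    stepS (sched p lst ℓ) (sched p lst (ℓ + 1)) := by
  rcases ℓ with _ | ℓ
  · left
    simp [sched]
  · by_cases h : (ℓ + 1) % p = 0
    · left
      simp [sched, h]
    · right
      have hlt := Nat.mod_lt ℓ (show 0 < p by omega)
      have hlt' := Nat.mod_lt (ℓ + 1) (show 0 < p by omega)
      have hne : ¬ p ∣ ℓ + 1 := fun hh => h (Nat.mod_eq_zero_of_dvd hh)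
      have hdiv : (ℓ + 1) / p = ℓ / p := by
        rw [Nat.succ_div, if_neg hne, add_zero]
      have hmod : (ℓ + 1) % p = ℓ % p + 1 := by
        have h1 := Nat.div_add_mod (ℓ + 1) p
        have h2 := Nat.div_add_mod ℓ p
        rw [hdiv] at h1
        omega
      have hget : ℓ % p < (lst (ℓ / p)).length := by rw [hlen]; omega
      refine ⟨(lst (ℓ / p))[ℓ % p], ?_⟩
      have e1 : (sched p lst (ℓ + 1)).getD 0 =
          fun r => ((lst (ℓ / p)).take (ℓ % p)).count r := by
        simp only [sched]
        split_ifs with h0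
        · funext r; simp [h0]
        · rfl
      rw [e1]
      simp only [sched]
      rw [if_neg h, hdiv, hmod, List.take_succ_eq_append_getElem hget]
      congr 1
      funext r
      rw [List.count_append, Pi.add_apply, List.count_singleton, Pi.single_apply]
      simp only [beq_iff_eq]
      congr 1
      exact if_congr eq_comm rfl rfl

lemma sched_cover {d p : ℕ} (hp : 1 ≤ p) (N : ℕ) (hN : 1 ≤ N) (lst : ℕ → List (Fin d))
    (hlst : ∀ γ : Fin d → ℕ, ∑ i, γ i ≤ p - 1 → ∃ k < N,
        ∀ r, ((lst k).take (∑ i, γ i)).count r = γ r) (α : MIdx d p) :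
    ∃ ℓ, 1 ≤ ℓ ∧ ℓ ≤ p * N ∧ α ∈ blk d p (sched p lst ℓ) := by
  have hpN : 1 ≤ p * N := Nat.mul_pos hp hN
  suffices h : ∃ ℓ, 1 ≤ ℓ ∧ ℓ ≤ p * N ∧ (fun i => (α.1 i : ℕ)) ∈ exps (sched p lst ℓ) by
    obtain ⟨ℓ, h1, h2, h3⟩ := h
    exact ⟨ℓ, h1, h2, Finset.mem_image.2 ⟨_, h3, mkI_self α⟩⟩
  have hα := α.2
  generalize hA : (fun i => (α.1 i : ℕ)) = A
  have hA' : ∑ i, A i ≤ p := by rw [← hA]; exact hα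
  by_cases hz : A = 0
  · exact ⟨1, le_rfl, hpN, by rw [hz]; simp [exps]⟩
  obtain ⟨r, hr⟩ : ∃ r, A r ≠ 0 := by
    by_contra! hh
    exact hz (funext hh)
  have hle : (Pi.single r 1 : Fin d → ℕ) ≤ A := by
    intro i
    by_cases hi : i = r
    · subst hi; simp; omega
    · simp [hi]
  obtain ⟨γ, rfl⟩ : ∃ γ, A = γ + Pi.single r 1 := ⟨A - Pi.single r 1, (tsub_add_cancel_of_le hle).symm⟩
  simp only [Pi.add_apply, Finset.sum_add_distrib, sum_single'] at hA'
  by_cases hγ : ∑ i, γ i = 0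
  · have : γ = 0 := by
      funext i
      exact (Finset.sum_eq_zero_iff.1 hγ) i (Finset.mem_univ i)
    exact ⟨1, le_rfl, hpN, by rw [this]; simp [exps]⟩
  obtain ⟨k, hk, hcnt⟩ := hlst γ (by omega)
  refine ⟨p * k + ∑ i, γ i + 1, by omega, ?_, ?_⟩
  · have : p * (k + 1) ≤ p * N := Nat.mul_le_mul_left p hk
    rw [mul_add] at this
    omega
  · have hlt : ∑ i, γ i < p := by omega
    have hmod : (p * k + ∑ i, γ i) % p = ∑ i, γ i := by
      rw [Nat.mul_add_mod, Nat.mod_eq_of_lt hlt]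
    have hdiv : (p * k + ∑ i, γ i) / p = k := by
      rw [Nat.mul_add_div (by omega), Nat.div_eq_of_lt hlt, add_zero]
    have : sched p lst (p * k + ∑ i, γ i + 1) = some γ := by
      simp only [sched, hmod, hdiv, if_neg hγ]
      congr 1
      funext r
      exact hcnt r
    rw [this]
    simp [exps, sexps]

/-- for the degree-`p` polynomial ICL task there are
`L ≤ p·C(d+p-2, p-1)` blocks `b_1, …, b_L ⊆ M_p`, each of size at most `2d+1` and
jointly covering `M_p`, and weights of a `2L`-layer bilinear Transformer with embedding
dimension `2d+1` implementing the corresponding block-coordinate descent over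
polynomial regression. -/
theorem stmt18 (d p n : ℕ) (hd : 1 ≤ d) (hp : 1 ≤ p) (hn : 1 ≤ n) (η : ℕ → ℝ) :
    ∃ L : ℕ, L ≤ p * Nat.choose (d + p - 2) (p - 1) ∧
      ∃ (b : ℕ → Finset (MIdx d p))
        (W0 W1 : ℕ → Matrix (Fin (2 * d + 1)) (Fin (2 * d + 1)) ℝ)
        (P Q : ℕ → Matrix (Fin (2 * d + 1 + 1)) (Fin (2 * d + 1 + 1)) ℝ),
        (∀ α : MIdx d p, ∃ ℓ, 1 ≤ ℓ ∧ ℓ ≤ L ∧ α ∈ b ℓ) ∧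
        (∀ ℓ, 1 ≤ ℓ → ℓ ≤ L → (b ℓ).card ≤ 2 * d + 1) ∧
        ∀ (x : Fin (n + 1) → Fin d → ℝ) (y : Fin n → ℝ) (ℓ : ℕ), 1 ≤ ℓ → ℓ ≤ L →
          TFbilinFwd (2 * d + 1) n W0 W1 P Q (promptX d (2 * d + 1) n x y) ℓ
              (Fin.last (2 * d + 1)) (Fin.last n)
            = polyPred d p
                (bcdIter (polyLoss d p n (fun i => x i.castSucc) y) η b ℓ)
                (x (Fin.last n)) := by
  obtain ⟨lst, hlen, hlst⟩ := exists_lists d p hd hp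
  obtain ⟨W0, W1, P, Q, h⟩ := core d p n hp hn η (sched p lst) rfl
    (sched_step hp lst hlen) (sched_ok hp lst hlen)
  refine ⟨_, le_rfl, fun ℓ => blk d p (sched p lst ℓ), W0, W1, P, Q, ?_,
    fun ℓ _ _ => blk_card d p _, fun x y ℓ _ _ => ?_⟩
  · exact sched_cover hp _ (Nat.choose_pos (by omega)) lst hlst
  · rw [h x y ℓ]
    have h1 : ¬ 2 * d + 1 ≤ d := by omega
    simp [stateMat, h1]
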